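/- For every positive integer N, the rational number ∑_{λ ⊢ N} ∏_{h ∈ H(λ)} (1 − 9/h²), where the sum is over all partitions λ of N and the product is over the multiset H(λ) of hook lengths of λ, equals 0 if and only if there are no 3-core partitions of N. -/

import Mathlib

/-- The length of the `j`-th column (0-indexed) of the Young diagram of `p`,
i.e. the `(j+1)`-st part of the conjugate partition: the number of parts of `p`
exceeding `j`. -/
def colLen {N : ℕ} (p : N.Partition) (j : ℕ) : ℕ :=
  (p.parts.filter (fun a => j < a)).card

/-- The length of the `i`-th row (0-indexed) of the Young diagram of `p`,
i.e. the `(i+1)`-st part of `p` (conjugating twice recovers the partition). -/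
def rowLen {N : ℕ} (p : N.Partition) (i : ℕ) : ℕ :=
  ((Finset.range N).filter (fun j => i < colLen p j)).card

/-- The multiset of hook lengths of `p`: for each cell `(i, j)` (0-indexed) of the
Young diagram, the hook length is `λ_{i+1} - (j+1) + λ'_{j+1} - (i+1) + 1`. -/
def hooks {N : ℕ} (p : N.Partition) : Multiset ℕ :=
  (((Finset.range N) ×ˢ (Finset.range N)).filter
      (fun c => c.2 < rowLen p c.1)).val.map
    (fun c => rowLen p c.1 + colLen p c.2 - c.1 - c.2 - 1)

/-- A partition is a `3`-core if none of its hook lengths is divisible by `3`. -/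
def IsThreeCore {N : ℕ} (p : N.Partition) : Prop :=
  ∀ h ∈ hooks p, ¬ (3 ∣ h)

/-- The Eisenstein integers `ℤ[ω]`, with `ω ^ 2 = -1 - ω`. -/
abbrev Eis : Type := QuadraticAlgebra ℤ (-1) (-1)

namespace Eis

open QuadraticAlgebra

theorem norm_eq (x : Eis) : norm x = x.re ^ 2 - x.re * x.im + x.im ^ 2 := by
  rw [norm_def]; ring

theorem four_mul_norm (x : Eis) : 4 * norm x = (2 * x.re - x.im) ^ 2 + 3 * x.im ^ 2 := by
  rw [norm_eq]; ring

theorem four_mul_norm' (x : Eis) : 4 * norm x = (2 * x.im - x.re) ^ 2 + 3 * x.re ^ 2 := by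
  rw [norm_eq]; ring

theorem eq_zero_of_norm {x : Eis} (h : norm x = 0) : x = 0 := by
  have h1 := four_mul_norm x
  have h2 := four_mul_norm' x
  rw [h] at h1 h2
  ext
  · exact pow_eq_zero_iff two_ne_zero |>.1 (by nlinarith [sq_nonneg (2 * x.im - x.re), sq_nonneg x.re])
  · exact pow_eq_zero_iff two_ne_zero |>.1 (by nlinarith [sq_nonneg (2 * x.re - x.im), sq_nonneg x.im])

instance : NoZeroDivisors Eis where
  eq_zero_or_eq_zero_of_mul_eq_zero {x y} h := by
    have : norm x * norm y = 0 := by rw [← map_mul, h, QuadraticAlgebra.norm_zero]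
    exact (mul_eq_zero.1 this).imp eq_zero_of_norm eq_zero_of_norm

theorem mul_star_self (x : Eis) : x * star x = ((norm x : ℤ) : Eis) := by
  rw [← algebraMap_norm_eq_mul_star]; rfl

/-- An Eisenstein integer is primary if it is congruent to `1` modulo `1 - ω`. -/
def Primary (x : Eis) : Prop := (3 : ℤ) ∣ x.re + x.im - 1

theorem re_add_im_mul (x y : Eis) :
    (x * y).re + (x * y).im = (x.re + x.im) * (y.re + y.im) - 3 * (x.im * y.im) := by
  simp only [re_mul, im_mul]; ring

theorem Primary.mul {x y : Eis} (hx : Primary x) (hy : Primary y) : Primary (x * y) := by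
  obtain ⟨u, hu⟩ := hx
  obtain ⟨v, hv⟩ := hy
  refine ⟨u * (y.re + y.im) + v - x.im * y.im, ?_⟩
  rw [re_add_im_mul]
  linear_combination (y.re + y.im) * hu + hv

theorem Primary.of_mul {x y : Eis} (hx : Primary x) (hxy : Primary (x * y)) : Primary y := by
  obtain ⟨u, hu⟩ := hx
  obtain ⟨v, hv⟩ := hxy
  rw [re_add_im_mul] at hv
  exact ⟨v + x.im * y.im - u * (y.re + y.im), by linear_combination hv - (y.re + y.im) * hu⟩

theorem primary_one : Primary 1 := ⟨0, by simp⟩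

theorem Primary.pow {x : Eis} (hx : Primary x) (k : ℕ) : Primary (x ^ k) := by
  induction k with
  | zero => simpa using primary_one
  | succ k ih => rw [pow_succ]; exact ih.mul hx

theorem Primary.star {x : Eis} (hx : Primary x) : Primary (star x) := by
  obtain ⟨u, hu⟩ := hx
  refine ⟨u - x.im, ?_⟩
  simp only [re_star, im_star]
  linear_combination hu

theorem norm_primary_emod {x : Eis} (hx : Primary x) : norm x % 3 = 1 := by
  obtain ⟨u, hu⟩ := hx
  have : norm x = 1 + 3 * (3 * u ^ 2 + 2 * u - x.re * x.im) := by
    rw [norm_eq]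
    have : x.re = 3 * u + 1 - x.im := by linear_combination hu
    rw [this]; ring
  omega

theorem finite_primary (n : ℕ) : {x : Eis | norm x = n ∧ Primary x}.Finite := by
  refine Set.Finite.subset
    (((Finset.Icc (-(2 * n : ℤ)) (2 * n)) ×ˢ (Finset.Icc (-(2 * n : ℤ)) (2 * n))).image
      (fun c : ℤ × ℤ => (⟨c.1, c.2⟩ : Eis))).finite_toSet ?_
  rintro x ⟨hx, -⟩
  have h1 := four_mul_norm x
  have h2 := four_mul_norm' x
  rw [hx] at h1 h2
  have key : ∀ t s : ℤ, 4 * (n : ℤ) = s ^ 2 + 3 * t ^ 2 → -(2 * n : ℤ) ≤ t ∧ t ≤ 2 * n := by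
    intro t s h
    have : t ^ 2 ≤ (2 * n : ℤ) ^ 2 := by
      rcases Nat.eq_zero_or_pos n with rfl | hn
      · push_cast at *; nlinarith [sq_nonneg s]
      · have : (1 : ℤ) ≤ n := by exact_mod_cast hn
        nlinarith [sq_nonneg s, sq_nonneg t]
    exact abs_le.1 (abs_le_of_sq_le_sq this (by positivity))
  simp only [Finset.coe_image, Set.mem_image, Finset.mem_coe, Finset.mem_product, Finset.mem_Icc]
  exact ⟨(x.re, x.im), ⟨key _ _ h2, key _ _ h1⟩, rfl⟩

/-- The finite set of primary Eisenstein integers of norm `n`. -/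
noncomputable def primaryOfNorm (n : ℕ) : Finset Eis := (finite_primary n).toFinset

theorem mem_primaryOfNorm {n : ℕ} {x : Eis} :
    x ∈ primaryOfNorm n ↔ norm x = n ∧ Primary x := by
  simp [primaryOfNorm]

/-- The sum of the cubes of the primary Eisenstein integers of norm `n`. -/
noncomputable def cubeSum (n : ℕ) : Eis := ∑ x ∈ primaryOfNorm n, x ^ 3

theorem intCast_dvd_of_im {p : ℕ} (hp : p.Prime) {x : Eis} (h : (p : ℤ) ∣ norm x)
    (him : (p : ℤ) ∣ x.im) : ((p : ℤ) : Eis) ∣ x := by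
  have hp' : Prime (p : ℤ) := Nat.prime_iff_prime_int.1 hp
  have hre : (p : ℤ) ∣ x.re := by
    refine hp'.dvd_of_dvd_pow (n := 2) ?_
    have : x.re ^ 2 = norm x + x.im * (x.re - x.im) := by rw [norm_eq]; ring
    rw [this]
    exact dvd_add h (him.mul_right _)
  obtain ⟨u, hu⟩ := hre
  obtain ⟨v, hv⟩ := him
  refine ⟨⟨u, v⟩, ?_⟩
  ext <;> simp [hu, hv]

theorem norm_pos {x : Eis} (hx : x ≠ 0) : 0 < norm x := by
  refine lt_of_le_of_ne ?_ (fun h => hx (eq_zero_of_norm h.symm))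
  nlinarith [four_mul_norm x, sq_nonneg (2 * x.re - x.im), sq_nonneg x.im]

theorem dvd_of_intCast_dvd_mul_star {p : ℕ} (hp : p.Prime) {π x : Eis} (hπ : norm π = p)
    (h : ((p : ℤ) : Eis) ∣ x * star π) : π ∣ x := by
  obtain ⟨y, hy⟩ := h
  have h0 : star π ≠ 0 := by
    intro h
    have := QuadraticAlgebra.norm_star π
    rw [h, QuadraticAlgebra.norm_zero, hπ] at this
    exact hp.ne_zero (by exact_mod_cast this.symm)
  refine ⟨y, mul_right_cancel₀ h0 ?_⟩
  rw [hy, ← hπ, ← mul_star_self]; ring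

theorem dvd_or_star_dvd {p : ℕ} (hp : p.Prime) {π x : Eis} (hπ : norm π = p)
    (h : (p : ℤ) ∣ norm x) : π ∣ x ∨ star π ∣ x := by
  have hp' : Prime (p : ℤ) := Nat.prime_iff_prime_int.1 hp
  have him : (p : ℤ) ∣ (x * star π).im * (x * π).im := by
    have : (x * star π).im * (x * π).im = x.im ^ 2 * norm π - π.im ^ 2 * norm x := by
      simp only [norm_eq, im_mul, re_star, im_star]; ring
    rw [this, hπ]
    exact dvd_sub (Dvd.intro_left _ rfl) (h.mul_left _)
  refine (hp'.dvd_or_dvd him).imp (fun h1 => ?_) (fun h1 => ?_)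
  · refine dvd_of_intCast_dvd_mul_star hp hπ (intCast_dvd_of_im hp ?_ h1)
    rw [map_mul]; exact h.mul_right _
  · refine dvd_of_intCast_dvd_mul_star hp (QuadraticAlgebra.norm_star π ▸ hπ) ?_
    rw [star_star]
    refine intCast_dvd_of_im hp ?_ h1
    rw [map_mul]; exact h.mul_right _

/-- Multiplication by the conjugate of a split prime preserves non-divisibility by that prime. -/
theorem not_dvd_star_mul {p : ℕ} (hp : p.Prime) {π x : Eis} (hπ : norm π = p) (hP : Primary π)
    (h : ¬ π ∣ x) : ¬ π ∣ star π * x := by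
  intro h1
  apply h
  have hp' : Prime (p : ℤ) := Nat.prime_iff_prime_int.1 hp
  have h2 : π ∣ ((trace π : ℤ) : Eis) * x := by
    have : ((trace π : ℤ) : Eis) = π + star π := by
      rw [← algebraMap_trace_eq_add_star]; rfl
    rw [this, add_mul]
    exact dvd_add (Dvd.intro _ rfl) h1
  have h3 : π ∣ ((p : ℤ) : Eis) * x := by
    rw [← hπ, ← mul_star_self, mul_assoc]; exact Dvd.intro _ rfl
  have hp3 : (p : ℤ) % 3 = 1 := hπ ▸ norm_primary_emod hP
  have h4 : ¬ (p : ℤ) ∣ trace π := by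
    rintro ⟨t, ht⟩
    have e : (4 * p : ℤ) = trace π ^ 2 + 3 * π.im ^ 2 := by
      rw [← hπ, four_mul_norm, trace_def]; ring
    have d1 : (p : ℤ) ∣ 3 * π.im ^ 2 :=
      ⟨4 - p * t ^ 2, by rw [ht] at e; linear_combination -e⟩
    have d2 : (p : ℤ) ∣ π.im := by
      rcases hp'.dvd_or_dvd d1 with d | d
      · have : p ∣ 3 := by exact_mod_cast d
        have := (Nat.prime_dvd_prime_iff_eq hp Nat.prime_three).1 this
        subst this; norm_num at hp3
      · exact hp'.dvd_of_dvd_pow d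
    obtain ⟨s, hs⟩ := d2
    have d3 : (p : ℤ) ∣ 4 := by
      refine ⟨t ^ 2 + 3 * s ^ 2, mul_left_cancel₀ hp'.ne_zero ?_⟩
      rw [ht, hs] at e; linear_combination e
    have : p ∣ 2 ^ 2 := by exact_mod_cast d3
    have := (Nat.prime_dvd_prime_iff_eq hp Nat.prime_two).1 (hp.dvd_of_dvd_pow this)
    subst this; norm_num at hp3
  obtain ⟨a, b, hab⟩ := (hp'.coprime_iff_not_dvd).2 h4
  have : x = ((a : ℤ) : Eis) * (((p : ℤ) : Eis) * x) + ((b : ℤ) : Eis) * (((trace π : ℤ) : Eis) * x) := by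
    rw [← mul_assoc, ← mul_assoc, ← add_mul, ← Int.cast_mul, ← Int.cast_mul, ← Int.cast_add, hab]
    simp
  rw [this]
  exact dvd_add (h3.mul_left _) (h2.mul_left _)

theorem not_dvd_star_pow_mul {p : ℕ} (hp : p.Prime) {π x : Eis} (hπ : norm π = p)
    (hP : Primary π) (h : ¬ π ∣ x) (k : ℕ) : ¬ π ∣ star π ^ k * x := by
  induction k with
  | zero => simpa using h
  | succ k ih => rw [pow_succ', mul_assoc]; exact not_dvd_star_mul hp hπ hP ih

theorem norm_dvd_norm {x y : Eis} (h : x ∣ y) : norm x ∣ norm y := by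
  obtain ⟨z, rfl⟩ := h
  rw [map_mul]; exact Dvd.intro _ rfl

theorem star_pow_dvd {p : ℕ} (hp : p.Prime) {π : Eis} (hπ : norm π = p) (k m : ℕ) (x : Eis)
    (hx : norm x = (p : ℤ) ^ k * m) (h : ¬ π ∣ x) : star π ^ k ∣ x := by
  induction k generalizing x with
  | zero => simp
  | succ k ih =>
    have hd : (p : ℤ) ∣ norm x := by rw [hx, pow_succ', mul_assoc]; exact Dvd.intro _ rfl
    obtain ⟨y, rfl⟩ := (dvd_or_star_dvd hp hπ hd).resolve_left h
    rw [map_mul, QuadraticAlgebra.norm_star, hπ, pow_succ', mul_assoc] at hx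
    rw [pow_succ']
    refine mul_dvd_mul_left _ (ih y ?_ fun h' => h (h'.mul_left _))
    exact mul_left_cancel₀ (by exact_mod_cast hp.ne_zero) hx

theorem cubeSum_split {p : ℕ} (hp : p.Prime) {π : Eis} (hπ : norm π = p) (hP : Primary π)
    {m : ℕ} (hm : ¬ p ∣ m) (k : ℕ) :
    cubeSum (p ^ (k + 1) * m) =
      π ^ 3 * cubeSum (p ^ k * m) + (star π ^ (k + 1)) ^ 3 * cubeSum m := by
  classical
  have hp0 : (p : ℤ) ≠ 0 := by exact_mod_cast hp.ne_zero
  have hπ0 : π ≠ 0 := by rintro rfl; rw [QuadraticAlgebra.norm_zero] at hπ; exact hp0 hπ.symm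
  have hs0 : star π ^ (k + 1) ≠ 0 := by
    refine pow_ne_zero _ fun h => ?_
    have := QuadraticAlgebra.norm_star π
    rw [h, QuadraticAlgebra.norm_zero, hπ] at this
    exact hp0 this.symm
  have hset : primaryOfNorm (p ^ (k + 1) * m) =
      (primaryOfNorm (p ^ k * m)).image (π * ·) ∪
        (primaryOfNorm m).image (star π ^ (k + 1) * ·) := by
    ext x
    simp only [Finset.mem_union, Finset.mem_image, mem_primaryOfNorm]
    constructor
    · rintro ⟨hx, hxP⟩
      push_cast at hx
      by_cases h : π ∣ x
      · obtain ⟨y, rfl⟩ := h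
        refine Or.inl ⟨y, ⟨?_, hP.of_mul hxP⟩, rfl⟩
        rw [map_mul, hπ, pow_succ', mul_assoc] at hx
        push_cast
        exact mul_left_cancel₀ hp0 hx
      · obtain ⟨y, rfl⟩ := star_pow_dvd hp hπ (k + 1) m x hx h
        refine Or.inr ⟨y, ⟨?_, (hP.star.pow _).of_mul hxP⟩, rfl⟩
        rw [map_mul, map_pow, QuadraticAlgebra.norm_star, hπ] at hx
        exact mul_left_cancel₀ (pow_ne_zero _ hp0) hx
    · rintro (⟨y, ⟨hy, hyP⟩, rfl⟩ | ⟨y, ⟨hy, hyP⟩, rfl⟩)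
      · exact ⟨by rw [map_mul, hπ, hy]; push_cast; ring, hP.mul hyP⟩
      · exact ⟨by rw [map_mul, map_pow, QuadraticAlgebra.norm_star, hπ, hy]; push_cast; ring,
          (hP.star.pow _).mul hyP⟩
  have hdisj : Disjoint ((primaryOfNorm (p ^ k * m)).image (π * ·))
      ((primaryOfNorm m).image (star π ^ (k + 1) * ·)) := by
    rw [Finset.disjoint_left]
    rintro _ h1 h2
    obtain ⟨y, -, rfl⟩ := Finset.mem_image.1 h1
    obtain ⟨z, hz, h⟩ := Finset.mem_image.1 h2
    refine not_dvd_star_pow_mul hp hπ hP (x := z) (fun hd => hm ?_) (k + 1) (h ▸ Dvd.intro _ rfl)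
    have := norm_dvd_norm hd
    rw [hπ, (mem_primaryOfNorm.1 hz).1] at this
    exact_mod_cast this
  rw [cubeSum, hset, Finset.sum_union hdisj, Finset.sum_image, Finset.sum_image, cubeSum, cubeSum,
    Finset.mul_sum, Finset.mul_sum]
  · simp only [mul_pow]
  · exact fun x _ y _ h => mul_left_cancel₀ hs0 h
  · exact fun x _ y _ h => mul_left_cancel₀ hπ0 h

theorem cubeSum_pow_mul_ne_zero {p : ℕ} (hp : p.Prime) {π : Eis} (hπ : norm π = p)
    (hP : Primary π) {m : ℕ} (hm : ¬ p ∣ m) (h0 : cubeSum m ≠ 0) (k : ℕ) :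
    cubeSum (p ^ k * m) ≠ 0 := by
  have key : ∀ k, ∃ s : Eis, cubeSum (p ^ k * m) = s * cubeSum m ∧ ¬ π ∣ s := by
    have h1 : ¬ π ∣ 1 := by
      intro h
      have := norm_dvd_norm h
      rw [QuadraticAlgebra.norm_one, hπ] at this
      exact hp.one_lt.ne' (by exact_mod_cast Int.eq_one_of_dvd_one (by positivity) this)
    intro k
    induction k with
    | zero => exact ⟨1, by simp, h1⟩
    | succ k ih =>
      obtain ⟨s, hs, -⟩ := ih
      refine ⟨π ^ 3 * s + (star π ^ (k + 1)) ^ 3, by rw [cubeSum_split hp hπ hP hm, hs]; ring, ?_⟩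
      rw [dvd_add_right ((dvd_pow_self π three_ne_zero).mul_right s), ← pow_mul]
      simpa using not_dvd_star_pow_mul hp hπ hP h1 ((k + 1) * 3)
  obtain ⟨s, hs, hd⟩ := key k
  rw [hs]
  exact mul_ne_zero (fun h => hd (h ▸ dvd_zero _)) h0

theorem intCast_dvd_of_inert {p : ℕ} (hp : p.Prime) (h3 : p % 3 = 2) {x : Eis}
    (h : (p : ℤ) ∣ norm x) : ((p : ℤ) : Eis) ∣ x := by
  refine intCast_dvd_of_im hp h ?_
  have : Fact p.Prime := ⟨hp⟩
  rw [← ZMod.intCast_zmod_eq_zero_iff_dvd] at h ⊢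
  rw [norm_eq] at h
  push_cast at h
  set a : ZMod p := (x.re : ZMod p)
  set b : ZMod p := (x.im : ZMod p)
  by_contra hb
  have ha : a ≠ 0 := by
    intro ha
    rw [ha] at h
    exact hb (pow_eq_zero_iff two_ne_zero |>.1 (by linear_combination h))
  obtain ⟨k, hk⟩ : ∃ k, p - 1 = 3 * k + 1 := ⟨p / 3, by omega⟩
  have fa := ZMod.pow_card_sub_one_eq_one ha
  have fb := ZMod.pow_card_sub_one_eq_one (neg_ne_zero.2 hb)
  rw [hk, pow_succ, pow_mul] at fa fb
  have hcube : a ^ 3 = (-b) ^ 3 := by linear_combination (a + b) * h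
  have hab : a = -b := by
    have hne : ((-b) ^ 3) ^ k ≠ 0 := pow_ne_zero _ (pow_ne_zero _ (neg_ne_zero.2 hb))
    refine mul_left_cancel₀ hne ?_
    rw [fb, ← hcube, fa]
  have h3b : (3 : ZMod p) * b ^ 2 = 0 := by rw [hab] at h; linear_combination h
  have h30 : ((3 : ℕ) : ZMod p) = 0 := by
    simpa [hb] using h3b
  rw [ZMod.natCast_eq_zero_iff] at h30
  have := (Nat.prime_dvd_prime_iff_eq hp Nat.prime_three).1 h30
  subst this
  norm_num at h3

theorem exists_zmod_root {p : ℕ} (hp : p.Prime) (h3 : p % 3 = 1) :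
    ∃ d : ZMod p, d ^ 2 + d + 1 = 0 := by
  have : Fact p.Prime := ⟨hp⟩
  have : Fact (Nat.Prime 3) := ⟨Nat.prime_three⟩
  have hdvd : 3 ∣ Fintype.card (ZMod p)ˣ := by
    rw [ZMod.card_units]; omega
  obtain ⟨u, hu⟩ := exists_prime_orderOf_dvd_card 3 hdvd
  have hu3 : (u : ZMod p) ^ 3 = 1 := by
    have := pow_orderOf_eq_one u
    rw [hu] at this
    simpa using congrArg Units.val this
  have hu1 : (u : ZMod p) - 1 ≠ 0 := by
    intro h
    have : u = 1 := Units.ext (by simpa using sub_eq_zero.1 h)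
    rw [this, orderOf_one] at hu
    norm_num at hu
  refine ⟨u, mul_left_cancel₀ hu1 ?_⟩
  linear_combination hu3

theorem exists_norm_mul {p : ℕ} (hp : p.Prime) (h3 : p % 3 = 1) :
    ∃ x : Eis, ∃ t : ℤ, norm x = p * t ∧ 0 < t ∧ t < 3 := by
  obtain ⟨d, hd⟩ := exists_zmod_root hp h3
  have : Fact p.Prime := ⟨hp⟩
  set r := Nat.sqrt p with hr
  have hr1 : p < (r + 1) * (r + 1) := Nat.lt_succ_sqrt p
  have hr2 : r * r < p := by
    refine lt_of_le_of_ne (Nat.sqrt_le p) fun h => ?_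
    have h1 := hp.one_lt
    rcases hp.eq_one_or_self_of_dvd r ⟨r, h.symm⟩ with h' | h' <;> rw [h'] at h <;> nlinarith
  obtain ⟨⟨x₁, y₁⟩, h₁, ⟨x₂, y₂⟩, h₂, hne, heq⟩ :=
    Finset.exists_ne_map_eq_of_card_lt_of_maps_to
      (s := Finset.range (r + 1) ×ˢ Finset.range (r + 1)) (t := (Finset.univ : Finset (ZMod p)))
      (by simpa [ZMod.card] using hr1)
      (f := fun c => (c.1 : ZMod p) + d * c.2) (fun _ _ => Finset.mem_coe.2 (Finset.mem_univ _))
  simp only [Finset.mem_product, Finset.mem_range] at h₁ h₂ heq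
  let x : Eis := ⟨(x₁ : ℤ) - x₂, (y₁ : ℤ) - y₂⟩
  have hx0 : x ≠ 0 := by
    intro h
    have e1 := congrArg QuadraticAlgebra.re h
    have e2 := congrArg QuadraticAlgebra.im h
    simp only [x, re_zero, im_zero] at e1 e2
    exact hne (Prod.ext (by simp only; omega) (by simp only; omega))
  have hpos := norm_pos hx0
  have hdvd : (p : ℤ) ∣ norm x := by
    rw [← ZMod.intCast_zmod_eq_zero_iff_dvd, norm_eq]
    simp only [x]
    push_cast
    have e : (x₁ : ZMod p) - x₂ = -d * (y₁ - y₂) := by linear_combination heq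
    rw [e]
    linear_combination ((y₁ : ZMod p) - y₂) ^ 2 * hd
  obtain ⟨t, ht⟩ := hdvd
  have hp0 : (0 : ℤ) < p := by exact_mod_cast hp.pos
  refine ⟨x, t, ht, pos_of_mul_pos_right (ht ▸ hpos) hp0.le, ?_⟩
  have hbound : norm x ≤ 3 * (r * r : ℤ) := by
    have b1 : -(r : ℤ) ≤ x.re ∧ x.re ≤ r := by simp only [x]; omega
    have b2 : -(r : ℤ) ≤ x.im ∧ x.im ≤ r := by simp only [x]; omega
    rw [norm_eq]
    nlinarith [mul_nonneg (sub_nonneg.2 b1.1) (sub_nonneg.2 b1.2),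
      mul_nonneg (sub_nonneg.2 b2.1) (sub_nonneg.2 b2.2),
      sq_nonneg (x.re + x.im), abs_le.2 b1]
  have hr2' : (r * r : ℤ) < p := by exact_mod_cast hr2
  nlinarith

theorem four_dvd_norm {x : Eis} (h : (2 : ℤ) ∣ norm x) : (4 : ℤ) ∣ norm x := by
  obtain ⟨y, rfl⟩ := intCast_dvd_of_inert Nat.prime_two rfl (x := x) h
  rw [map_mul, norm_intCast]
  exact Dvd.intro _ rfl

theorem exists_primary_of_split {p : ℕ} (hp : p.Prime) (h3 : p % 3 = 1) :
    ∃ π : Eis, norm π = p ∧ Primary π := by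
  obtain ⟨x, t, hx, ht0, ht3⟩ := exists_norm_mul hp h3
  have hxp : norm x = p := by
    obtain rfl | rfl : t = 1 ∨ t = 2 := by omega
    · simpa using hx
    · exfalso
      have h4 := four_dvd_norm (x := x) (hx ▸ Dvd.intro_left _ rfl)
      have h2 : 2 ∣ p := by omega
      have := (Nat.prime_dvd_prime_iff_eq Nat.prime_two hp).1 h2
      subst this
      norm_num at h3
  have hs : norm x = (x.re + x.im) ^ 2 - 3 * (x.re * x.im) := by rw [norm_eq]; ring
  obtain ⟨q, hq⟩ : ∃ q, x.re + x.im = 3 * q ∨ x.re + x.im = 3 * q + 1 ∨ x.re + x.im = 3 * q + 2 :=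
    ⟨(x.re + x.im) / 3, by omega⟩
  rcases hq with hq | hq | hq
  · exfalso
    have : (p : ℤ) = 3 * (3 * q ^ 2 - x.re * x.im) := by rw [← hxp, hs, hq]; ring
    omega
  · exact ⟨x, hxp, q, by omega⟩
  · exact ⟨-x, by rw [QuadraticAlgebra.norm_neg, hxp], -q - 1, by simp only [re_neg, im_neg]; omega⟩

theorem cubeSum_inert {p : ℕ} (hp : p.Prime) (h3 : p % 3 = 2) (m : ℕ) :
    cubeSum (p ^ 2 * m) = (((-p : ℤ)) : Eis) ^ 3 * cubeSum m := by
  classical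
  have hp0 : (p : ℤ) ≠ 0 := by exact_mod_cast hp.ne_zero
  have hpE : ((-p : ℤ) : Eis) ≠ 0 := by
    intro h
    have := congrArg QuadraticAlgebra.re h
    simp at this
    exact hp.ne_zero this
  have hP : Primary ((-p : ℤ) : Eis) := by
    refine ⟨-(p / 3) - 1, ?_⟩
    rw [re_intCast, im_intCast]
    simp only [Int.cast_id]
    omega
  have hset : primaryOfNorm (p ^ 2 * m) =
      (primaryOfNorm m).image (((-p : ℤ) : Eis) * ·) := by
    ext x
    simp only [Finset.mem_image, mem_primaryOfNorm]
    constructor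
    · rintro ⟨hx, hxP⟩
      push_cast at hx
      obtain ⟨y, hy⟩ := intCast_dvd_of_inert hp h3 (x := x) (by
        rw [hx, pow_two, mul_assoc]; exact Dvd.intro _ rfl)
      have hy' : ((-p : ℤ) : Eis) * (-y) = x := by rw [hy]; push_cast; ring
      rw [← hy'] at hxP hx
      refine ⟨-y, ⟨?_, hP.of_mul hxP⟩, hy'⟩
      rw [map_mul, norm_intCast, Int.cast_id, neg_sq] at hx
      exact mul_left_cancel₀ (pow_ne_zero _ hp0) hx
    · rintro ⟨y, ⟨hy, hyP⟩, rfl⟩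
      exact ⟨by rw [map_mul, norm_intCast, hy]; push_cast; ring, hP.mul hyP⟩
  rw [cubeSum, hset, Finset.sum_image fun x _ y _ h => mul_left_cancel₀ hpE h, cubeSum,
    Finset.mul_sum]
  simp only [mul_pow]

theorem cubeSum_one_ne_zero : cubeSum 1 ≠ 0 := by
  have hone : ∀ x ∈ primaryOfNorm 1, x ^ 3 = 1 := by
    intro x hx
    obtain ⟨hn, hP⟩ := mem_primaryOfNorm.1 hx
    have h1 := four_mul_norm x
    have h2 := four_mul_norm' x
    rw [hn] at h1 h2
    have b1 : x.re ^ 2 ≤ 1 := by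
      push_cast at h2
      have : 3 * x.re ^ 2 ≤ 4 := by nlinarith [sq_nonneg (2 * x.im - x.re)]
      omega
    have b2 : x.im ^ 2 ≤ 1 := by
      push_cast at h1
      have : 3 * x.im ^ 2 ≤ 4 := by nlinarith [sq_nonneg (2 * x.re - x.im)]
      omega
    obtain ⟨a, b⟩ := x
    simp only [Primary] at *
    obtain ⟨ha1, ha2⟩ := abs_le.1 (sq_le_one_iff_abs_le_one _ |>.1 b1)
    obtain ⟨hb1, hb2⟩ := abs_le.1 (sq_le_one_iff_abs_le_one _ |>.1 b2)
    interval_cases a <;> interval_cases b <;> simp_all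
    all_goals (ext <;> simp [pow_succ])
  rw [cubeSum, Finset.sum_congr rfl hone]
  have : (1 : Eis) ∈ primaryOfNorm 1 := mem_primaryOfNorm.2 ⟨by simp, primary_one⟩
  simpa using Finset.ne_empty_of_mem this

theorem cubeSum_ne_zero (n : ℕ) (hn : 0 < n) (h : (primaryOfNorm n).Nonempty) :
    cubeSum n ≠ 0 := by
  induction n using Nat.strong_induction_on with
  | _ n ih =>
  obtain ⟨x, hx⟩ := h
  obtain ⟨hxn, hxP⟩ := mem_primaryOfNorm.1 hx
  have hn3 : n % 3 = 1 := by
    have := norm_primary_emod hxP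
    omega
  by_cases h1 : n = 1
  · rw [h1]; exact cubeSum_one_ne_zero
  obtain ⟨p, hp, hpn⟩ := Nat.exists_prime_and_dvd h1
  have hp3 : p % 3 = 1 ∨ p % 3 = 2 := by
    by_contra hcon
    have : 3 ∣ n := (Nat.dvd_of_mod_eq_zero (by omega)).trans hpn
    omega
  rcases hp3 with hp3 | hp3
  · obtain ⟨π, hπ, hP⟩ := exists_primary_of_split hp hp3
    obtain ⟨k, m, hm, rfl⟩ := Nat.exists_eq_pow_mul_and_not_dvd hn.ne' p hp.ne_one
    have hk : k ≠ 0 := by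
      rintro rfl
      exact hm (by simpa using hpn)
    have hm0 : 0 < m := Nat.pos_of_ne_zero fun h => hm (h ▸ dvd_zero p)
    refine cubeSum_pow_mul_ne_zero hp hπ hP hm (ih m ?_ hm0 ?_) k
    · exact (Nat.lt_mul_iff_one_lt_left hm0).2 (Nat.one_lt_pow hk hp.one_lt)
    · push_cast at hxn
      clear ih hx hn hn3 h1 hpn hk
      induction k generalizing x with
      | zero => exact ⟨x, mem_primaryOfNorm.2 ⟨by simpa using hxn, hxP⟩⟩
      | succ k ihk =>
        have hd : (p : ℤ) ∣ norm x := by rw [hxn, pow_succ', mul_assoc]; exact Dvd.intro _ rfl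
        have hp0 : (p : ℤ) ≠ 0 := by exact_mod_cast hp.ne_zero
        rcases dvd_or_star_dvd hp hπ hd with ⟨y, rfl⟩ | ⟨y, rfl⟩
        · rw [map_mul, hπ, pow_succ', mul_assoc] at hxn
          exact ihk y (hP.of_mul hxP) (mul_left_cancel₀ hp0 hxn)
        · rw [map_mul, QuadraticAlgebra.norm_star, hπ, pow_succ', mul_assoc] at hxn
          exact ihk y (hP.star.of_mul hxP) (mul_left_cancel₀ hp0 hxn)
  · obtain ⟨y, rfl⟩ := intCast_dvd_of_inert hp hp3 (x := x) (hxn ▸ Int.natCast_dvd_natCast.2 hpn)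
    have hy0 : y ≠ 0 := by
      rintro rfl
      simp at hxn
      omega
    obtain ⟨m, hm⟩ := Int.eq_ofNat_of_zero_le (norm_pos hy0).le
    rw [map_mul, norm_intCast, hm, Int.cast_id] at hxn
    have hnm : n = p ^ 2 * m := by exact_mod_cast hxn.symm
    have hm0 : 0 < m := by have := norm_pos hy0; omega
    have hyP : Primary (-y) := by
      refine Primary.of_mul (x := ((-p : ℤ) : Eis)) ⟨-(p / 3) - 1, ?_⟩ ?_
      · rw [re_intCast, im_intCast]
        simp only [Int.cast_id]
        omega
      · have : ((-p : ℤ) : Eis) * (-y) = ((p : ℤ) : Eis) * y := by push_cast; ring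
        rwa [this]
    have hpE : ((-p : ℤ) : Eis) ≠ 0 := by
      intro h
      have := congrArg QuadraticAlgebra.re h
      simp at this
      exact hp.ne_zero this
    rw [hnm, cubeSum_inert hp hp3]
    refine mul_ne_zero (pow_ne_zero _ hpE) (ih m ?_ hm0 ⟨-y, ?_⟩)
    · rw [hnm]
      exact (Nat.lt_mul_iff_one_lt_left hm0).2 (Nat.one_lt_pow two_ne_zero hp.one_lt)
    · exact mem_primaryOfNorm.2 ⟨by rw [QuadraticAlgebra.norm_neg, hm], hyP⟩

theorem trace_pow_three (x : Eis) :
    trace (x ^ 3) = (x.re + x.im) * (2 * x.re - x.im) * (x.re - 2 * x.im) := by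
  simp only [trace_def, pow_succ, pow_zero, one_mul, re_mul, im_mul]; ring

theorem star_cubeSum (n : ℕ) : star (cubeSum n) = cubeSum n := by
  rw [cubeSum, star_sum]
  refine Finset.sum_nbij' star star ?_ ?_ ?_ ?_ ?_
  · intro x hx
    obtain ⟨h1, h2⟩ := mem_primaryOfNorm.1 hx
    exact mem_primaryOfNorm.2 ⟨by rw [QuadraticAlgebra.norm_star, h1], h2.star⟩
  · intro x hx
    obtain ⟨h1, h2⟩ := mem_primaryOfNorm.1 hx
    exact mem_primaryOfNorm.2 ⟨by rw [QuadraticAlgebra.norm_star, h1], h2.star⟩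
  · exact fun x _ => star_star x
  · exact fun x _ => star_star x
  · exact fun x _ => star_pow x 3

theorem trace_cubeSum_ne_zero {n : ℕ} (hn : 0 < n) (h : (primaryOfNorm n).Nonempty) :
    trace (cubeSum n) ≠ 0 := by
  have h0 := cubeSum_ne_zero n hn h
  have him := congrArg QuadraticAlgebra.im (star_cubeSum n)
  rw [im_star] at him
  intro ht
  rw [trace_def] at ht
  refine h0 (QuadraticAlgebra.ext ?_ ?_)
  · rw [re_zero]; omega
  · rw [im_zero]; omega

/-- The primary Eisenstein integers of norm `n` in a fundamental domain for multiplication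
by `ω`. -/
noncomputable def cone (n : ℕ) : Finset Eis :=
  (primaryOfNorm n).filter fun x => 0 < x.re + x.im ∧ 0 < 2 * x.re - x.im

theorem norm_omega : norm (⟨0, 1⟩ : Eis) = 1 := by rw [norm_eq]; norm_num

theorem omega_mul_mem {n : ℕ} {x : Eis} (hx : x ∈ primaryOfNorm n) :
    ⟨0, 1⟩ * x ∈ primaryOfNorm n := by
  obtain ⟨h1, h2⟩ := mem_primaryOfNorm.1 hx
  exact mem_primaryOfNorm.2 ⟨by rw [map_mul, norm_omega, h1, one_mul], Primary.mul ⟨0, rfl⟩ h2⟩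

theorem omega_mul_omega_mul_omega_mul (x : Eis) :
    (⟨0, 1⟩ : Eis) * ((⟨0, 1⟩ : Eis) * ((⟨0, 1⟩ : Eis) * x)) = x := by
  ext <;> simp only [re_mul, im_mul] <;> ring

theorem sum_filter_omega_mul (n : ℕ) (P : Eis → Prop) [DecidablePred P] :
    ∑ x ∈ (primaryOfNorm n).filter (fun x => P (⟨0, 1⟩ * x)), trace (x ^ 3) =
      ∑ x ∈ (primaryOfNorm n).filter P, trace (x ^ 3) := by
  refine Finset.sum_nbij' (fun x => ⟨0, 1⟩ * x) (fun x => ⟨0, 1⟩ * (⟨0, 1⟩ * x)) ?_ ?_ ?_ ?_ ?_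
  · intro x hx
    rw [Finset.mem_filter] at hx ⊢
    exact ⟨omega_mul_mem hx.1, hx.2⟩
  · intro x hx
    rw [Finset.mem_filter] at hx ⊢
    exact ⟨omega_mul_mem (omega_mul_mem hx.1), by
      rw [omega_mul_omega_mul_omega_mul]; exact hx.2⟩
  · exact fun x _ => omega_mul_omega_mul_omega_mul x
  · exact fun x _ => omega_mul_omega_mul_omega_mul x
  · intro x _
    simp only [trace_pow_three, re_mul, im_mul]; ring

theorem trace_cubeSum_eq (n : ℕ) :
    trace (cubeSum n) = 3 * ∑ x ∈ cone n, trace (x ^ 3) := by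
  have e1 := sum_filter_omega_mul n (fun x => 0 < x.re + x.im ∧ 0 < 2 * x.re - x.im)
  have e2 := sum_filter_omega_mul n
    (fun x => 0 < (⟨0, 1⟩ * x).re + (⟨0, 1⟩ * x).im ∧ 0 < 2 * (⟨0, 1⟩ * x).re - (⟨0, 1⟩ * x).im)
  rw [e1] at e2
  have hsum : trace (cubeSum n) = ∑ x ∈ primaryOfNorm n, trace (x ^ 3) := by
    rw [cubeSum, map_sum]
  have h3 : (3 : ℤ) * ∑ x ∈ cone n, trace (x ^ 3) = ∑ x ∈ cone n, trace (x ^ 3) +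
      ∑ x ∈ cone n, trace (x ^ 3) + ∑ x ∈ cone n, trace (x ^ 3) := by ring
  rw [hsum, h3]
  conv_rhs => enter [2]; rw [cone, ← e2]
  conv_rhs => enter [1, 2]; rw [cone, ← e1]
  rw [cone, Finset.sum_filter, Finset.sum_filter, Finset.sum_filter, ← Finset.sum_add_distrib,
    ← Finset.sum_add_distrib]
  refine Finset.sum_congr rfl fun x hx => ?_
  obtain ⟨u, hu⟩ := (mem_primaryOfNorm.1 hx).2
  simp only [re_mul, im_mul]
  split_ifs <;> omega

theorem sum_cone_ne_zero {n : ℕ} (hn : 0 < n) (h : (primaryOfNorm n).Nonempty) :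
    ∑ x ∈ cone n, trace (x ^ 3) ≠ 0 := by
  have := trace_cubeSum_ne_zero hn h
  rw [trace_cubeSum_eq] at this
  exact right_ne_zero_of_mul this

end Eis

/-- A `3`-core is determined by the pair of runner lengths of its abacus; `abacusStep` records the
effect on them of removing the first column of the `3`-core. -/
def abacusStep : ℕ × ℕ → ℕ × ℕ
  | (0, y) => (y, 0)
  | (x + 1, 0) => (0, x)
  | (x + 1, y + 1) => (x, y)

/-- The first-column hook lengths of the `3`-core with runner lengths `v`. -/
def abacusBeads (v : ℕ × ℕ) : Finset ℕ :=
  (Finset.range v.1).image (fun i => 3 * i + 1) ∪ (Finset.range v.2).image (fun i => 3 * i + 2)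

theorem mem_abacusBeads {v : ℕ × ℕ} {b : ℕ} :
    b ∈ abacusBeads v ↔ (b % 3 = 1 ∧ b < 3 * v.1) ∨ (b % 3 = 2 ∧ b < 3 * v.2) := by
  simp only [abacusBeads, Finset.mem_union, Finset.mem_image, Finset.mem_range]
  constructor
  · rintro (⟨i, hi, rfl⟩ | ⟨i, hi, rfl⟩) <;> omega
  · rintro (h | h)
    · exact Or.inl ⟨b / 3, by omega, by omega⟩
    · exact Or.inr ⟨b / 3, by omega, by omega⟩

theorem abacusBeads_injective : Function.Injective abacusBeads := by
  intro v w h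
  have h1 (i : ℕ) := congrArg (i ∈ ·) h
  simp only [mem_abacusBeads, eq_iff_iff] at h1
  have a := h1 (3 * v.1 + 1)
  have b := h1 (3 * w.1 + 1)
  have c := h1 (3 * v.2 + 2)
  have d := h1 (3 * w.2 + 2)
  exact Prod.ext (by omega) (by omega)

/-- Put a column that is `c` longer in front of a diagram with first-column hook lengths `s`. -/
def prependColumn (c : ℕ) (s : Finset ℕ) : Finset ℕ :=
  Finset.Icc 1 c ∪ s.image (· + (c + 1))

theorem mem_prependColumn {c b : ℕ} {s : Finset ℕ} :
    b ∈ prependColumn c s ↔ (1 ≤ b ∧ b ≤ c) ∨ (c + 1 ≤ b ∧ b - (c + 1) ∈ s) := by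
  simp only [prependColumn, Finset.mem_union, Finset.mem_Icc, Finset.mem_image]
  refine or_congr_right ⟨?_, fun h => ⟨_, h.2, by omega⟩⟩
  rintro ⟨a, ha, rfl⟩
  exact ⟨by omega, by simpa using ha⟩

theorem abacusBeads_eq (v : ℕ × ℕ) :
    abacusBeads v = prependColumn
      (v.1 + v.2 - ((abacusStep v).1 + (abacusStep v).2)) (abacusBeads (abacusStep v)) := by
  obtain ⟨_ | x, _ | y⟩ := v <;> ext b <;>
    simp only [mem_prependColumn, mem_abacusBeads, abacusStep] <;> omega

theorem exists_abacusStep_eq {u : ℕ × ℕ} {c : ℕ} (h : 3 ∉ prependColumn c (abacusBeads u)) :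
    ∃ w, abacusStep w = u ∧ w.1 + w.2 = u.1 + u.2 + c := by
  obtain ⟨x, y⟩ := u
  simp only [mem_prependColumn, mem_abacusBeads] at h
  obtain rfl | rfl | rfl : c = 0 ∨ c = 1 ∨ c = 2 := by omega
  · obtain rfl : y = 0 := by omega
    exact ⟨(0, x), rfl, by simp only; omega⟩
  · obtain rfl : x = 0 := by omega
    exact ⟨(y + 1, 0), rfl, by simp only; omega⟩
  · exact ⟨(x + 1, y + 1), rfl, by simp only; omega⟩

theorem size_abacusStep_le (v : ℕ × ℕ) :
    (abacusStep v).1 + (abacusStep v).2 ≤ v.1 + v.2 := by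
  obtain ⟨_ | x, _ | y⟩ := v <;> simp only [abacusStep] <;> omega

theorem exists_iterate_abacusStep (v : ℕ × ℕ) : ∃ n, abacusStep^[n] v = (0, 0) := by
  induction h : 2 * (v.1 + v.2) + (1 - v.1) using Nat.strong_induction_on
    generalizing v with
  | _ m ih =>
  by_cases hv : v = (0, 0)
  · exact ⟨0, hv⟩
  · have hlt : 2 * ((abacusStep v).1 + (abacusStep v).2) +
        (1 - (abacusStep v).1) < m := by
      rw [← h]
      clear ih h
      obtain ⟨_ | x, _ | y⟩ := v
      · exact absurd rfl hv
      all_goals simp only [abacusStep]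
      all_goals omega
    obtain ⟨n, hn⟩ := ih _ hlt (abacusStep v) rfl
    exact ⟨n + 1, by rwa [Function.iterate_succ_apply]⟩

/-- The product of `1 - 9 / h ^ 2` over the hook lengths of the `3`-core with runner lengths `v`. -/
def abacusWeight (v : ℕ × ℕ) : ℚ :=
  (3 * v.1 + 1) * (3 * v.2 + 2) * (3 * v.2 + 1 - 3 * v.1) / 2

theorem prod_runner_one (n : ℕ) :
    ∏ i ∈ Finset.range n, (1 - 9 / ((3 * i + 1 : ℕ) : ℚ) ^ 2) =
      -2 * (3 * (n : ℚ) + 1) / (3 * (n : ℚ) - 2) := by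
  induction n with
  | zero => norm_num
  | succ n ih =>
    have h1 : (3 * n - 2 : ℚ) ≠ 0 := by
      intro h
      have : (3 * n : ℤ) = 2 := by exact_mod_cast sub_eq_zero.1 h
      omega
    have h2 : (3 * n + 1 : ℚ) ≠ 0 := by positivity
    have h3 : (3 * ((n + 1 : ℕ) : ℚ) - 2) ≠ 0 := by
      push_cast; intro h; apply h2; linear_combination h
    rw [Finset.prod_range_succ, ih]
    push_cast at h3 ⊢
    field_simp
    ring

theorem prod_runner_two (n : ℕ) :
    ∏ i ∈ Finset.range n, (1 - 9 / ((3 * i + 2 : ℕ) : ℚ) ^ 2) =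
      -(3 * (n : ℚ) + 2) / (2 * (3 * (n : ℚ) - 1)) := by
  induction n with
  | zero => norm_num
  | succ n ih =>
    have h1 : (3 * n - 1 : ℚ) ≠ 0 := by
      intro h
      have : (3 * n : ℤ) = 1 := by exact_mod_cast sub_eq_zero.1 h
      omega
    have h2 : (3 * n + 2 : ℚ) ≠ 0 := by positivity
    have h3 : (3 * ((n + 1 : ℕ) : ℚ) - 1) ≠ 0 := by
      push_cast; intro h; apply h2; linear_combination h
    rw [Finset.prod_range_succ, ih]
    push_cast at h3 ⊢
    field_simp
    ring

theorem prod_abacusBeads (v : ℕ × ℕ) :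
    ∏ b ∈ abacusBeads v, (1 - 9 / (b : ℚ) ^ 2) =
      (3 * (v.1 : ℚ) + 1) * (3 * (v.2 : ℚ) + 2) / ((3 * (v.1 : ℚ) - 2) * (3 * (v.2 : ℚ) - 1)) := by
  rw [abacusBeads, Finset.prod_union, Finset.prod_image, Finset.prod_image, prod_runner_one,
    prod_runner_two, div_mul_div_comm]
  · refine Eq.trans ?_ (mul_div_mul_left _ _ two_ne_zero)
    congr 1 <;> ring
  · intro a _ b _ h; simp only at h; omega
  · intro a _ b _ h; simp only at h; omega
  · rw [Finset.disjoint_left]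
    intro b h1 h2
    simp only [Finset.mem_image] at h1 h2
    omega

theorem abacusWeight_eq (v : ℕ × ℕ) :
    abacusWeight v =
      abacusWeight (abacusStep v) * ∏ b ∈ abacusBeads v, (1 - 9 / (b : ℚ) ^ 2) := by
  have hn (n : ℕ) : (3 * n - 2 : ℚ) ≠ 0 := by
    intro h
    have : (3 * n : ℤ) = 2 := by exact_mod_cast sub_eq_zero.1 h
    omega
  have hm (n : ℕ) : (3 * n - 1 : ℚ) ≠ 0 := by
    intro h
    have : (3 * n : ℤ) = 1 := by exact_mod_cast sub_eq_zero.1 h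
    omega
  rw [prod_abacusBeads]
  have h1 := hn v.1
  have h2 := hm v.2
  obtain ⟨_ | x, _ | y⟩ := v <;> simp only [abacusStep, abacusWeight] at * <;> push_cast at * <;>
    field_simp <;> ring

theorem prod_iterate_abacusStep (n : ℕ) (v : ℕ × ℕ) (h : abacusStep^[n] v = (0, 0)) :
    ∏ k ∈ Finset.range n, ∏ b ∈ abacusBeads (abacusStep^[k] v), (1 - 9 / (b : ℚ) ^ 2) =
      abacusWeight v := by
  induction n generalizing v with
  | zero =>
    obtain rfl : v = (0, 0) := h
    norm_num [abacusWeight]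
  | succ n ih =>
    rw [Finset.prod_range_succ', abacusWeight_eq, ← ih _ h]
    rfl

theorem sum_iterate_abacusStep (n : ℕ) (v : ℕ × ℕ) (h : abacusStep^[n] v = (0, 0)) :
    ((∑ k ∈ Finset.range n, ((abacusStep^[k] v).1 + (abacusStep^[k] v).2) : ℕ) : ℤ) =
      v.1 ^ 2 + v.2 ^ 2 - v.1 * v.2 + v.2 := by
  induction n generalizing v with
  | zero =>
    obtain rfl : v = (0, 0) := h
    norm_num
  | succ n ih =>
    have := ih _ h
    rw [Finset.sum_range_succ']
    simp only [Function.iterate_succ_apply, Function.iterate_zero, id_eq] at this ⊢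
    rw [Nat.cast_add, this]
    obtain ⟨_ | x, _ | y⟩ := v <;> simp only [abacusStep] <;> push_cast <;> ring

theorem colLen_antitone {N : ℕ} (p : N.Partition) : Antitone (colLen p) := fun _ _ h =>
  Multiset.card_le_card (Multiset.monotone_filter_right _ fun _ h' => h.trans_lt h')

theorem le_of_mem_parts {N : ℕ} (p : N.Partition) {a : ℕ} (ha : a ∈ p.parts) : a ≤ N :=
  p.parts_sum ▸ Multiset.le_sum_of_mem ha

theorem colLen_eq_zero {N : ℕ} (p : N.Partition) {j : ℕ} (hj : N ≤ j) : colLen p j = 0 := by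
  rw [colLen, Multiset.card_eq_zero, Multiset.filter_eq_nil]
  exact fun a ha h => absurd (le_of_mem_parts p ha) (by omega)

theorem sum_card_filter_lt (s : Multiset ℕ) (M : ℕ) (h : ∀ a ∈ s, a ≤ M) :
    ∑ j ∈ Finset.range M, (s.filter (j < ·)).card = s.sum := by
  induction s using Multiset.induction with
  | empty => simp
  | cons a s ih =>
    have ha : a ≤ M := h a (Multiset.mem_cons_self a s)
    have key (j : ℕ) : ((a ::ₘ s).filter (j < ·)).card =
        (if j < a then 1 else 0) + (s.filter (j < ·)).card := by
      rw [Multiset.filter_cons]; split_ifs <;> simp [add_comm]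
    have hr : (Finset.range M).filter (· < a) = Finset.range a := by ext; simp; omega
    simp_rw [key]
    rw [Finset.sum_add_distrib, ih fun b hb => h b (Multiset.mem_cons_of_mem hb),
      ← Finset.sum_filter, hr]
    simp

theorem sum_colLen {N : ℕ} (p : N.Partition) :
    ∑ j ∈ Finset.range N, colLen p j = N :=
  (sum_card_filter_lt p.parts N fun _ => le_of_mem_parts p).trans p.parts_sum

theorem colLen_le {N : ℕ} (p : N.Partition) (j : ℕ) : colLen p j ≤ N := by
  rcases lt_or_ge j N with h | h
  · calc colLen p j ≤ ∑ j ∈ Finset.range N, colLen p j :=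
          Finset.single_le_sum (fun _ _ => Nat.zero_le _) (Finset.mem_range.2 h)
      _ = N := sum_colLen p
  · rw [colLen_eq_zero p h]; exact Nat.zero_le _

theorem card_filter_lt (s : Multiset ℕ) (j : ℕ) :
    (s.filter (j < ·)).card = s.count (j + 1) + (s.filter (j + 1 < ·)).card := by
  induction s using Multiset.induction with
  | empty => simp
  | cons a s ih =>
    rw [Multiset.filter_cons, Multiset.filter_cons, Multiset.count_cons]
    split_ifs <;> simp <;> omega

theorem colLen_injective {N : ℕ} : Function.Injective (colLen (N := N)) := by
  intro p q h
  refine Nat.Partition.ext (Multiset.ext.2 fun a => ?_)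
  cases a with
  | zero =>
    rw [Multiset.count_eq_zero_of_notMem fun h => (p.parts_pos h).ne rfl,
      Multiset.count_eq_zero_of_notMem fun h => (q.parts_pos h).ne rfl]
  | succ j =>
    have hp : colLen p j = _ + colLen p (j + 1) := card_filter_lt p.parts j
    have hq : colLen q j = _ + colLen q (j + 1) := card_filter_lt q.parts j
    rw [h] at hp
    omega

theorem lt_rowLen {N : ℕ} (p : N.Partition) {i j : ℕ} : j < rowLen p i ↔ i < colLen p j := by
  constructor
  · intro h
    by_contra hc
    suffices hsub : (Finset.range N).filter (fun k => i < colLen p k) ⊆ Finset.range j from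
      absurd (Finset.card_le_card hsub) (by rw [Finset.card_range]; exact not_le.2 h)
    intro k hk
    rw [Finset.mem_filter] at hk
    rw [Finset.mem_range]
    by_contra hjk
    exact hc (hk.2.trans_le (colLen_antitone p (not_lt.1 hjk)))
  · intro h
    refine Nat.lt_of_succ_le ?_
    rw [Nat.succ_eq_add_one, ← Finset.card_range (j + 1)]
    refine Finset.card_le_card fun k hk => ?_
    have hkj : k ≤ j := Nat.lt_succ_iff.1 (Finset.mem_range.1 hk)
    have hik : i < colLen p k := h.trans_le (colLen_antitone p hkj)
    refine Finset.mem_filter.2 ⟨Finset.mem_range.2 ?_, hik⟩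
    by_contra hN
    rw [colLen_eq_zero p (not_lt.1 hN)] at hik
    omega

theorem rowLen_antitone {N : ℕ} (p : N.Partition) : Antitone (rowLen p) := fun _ _ h =>
  Finset.card_le_card (Finset.monotone_filter_right _ fun _ _ h' => h.trans_lt h')

/-- The hook lengths of `p` in the `j`-th column. -/
def colHooks {N : ℕ} (p : N.Partition) (j : ℕ) : Finset ℕ :=
  (Finset.range (colLen p j)).image fun i => rowLen p i + colLen p j - i - j - 1

theorem colHook_injOn {N : ℕ} (p : N.Partition) (j : ℕ) :
    Set.InjOn (fun i => rowLen p i + colLen p j - i - j - 1) (Finset.range (colLen p j)) := by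
  intro a ha b hb h
  simp only [Finset.coe_range, Set.mem_Iio] at ha hb h
  have h1 := (lt_rowLen p).2 ha
  have h2 := (lt_rowLen p).2 hb
  rcases le_total a b with hab | hab
  · have := rowLen_antitone p hab
    omega
  · have := rowLen_antitone p hab
    omega

theorem mem_hooks {N : ℕ} (p : N.Partition) {h : ℕ} :
    h ∈ hooks p ↔ ∃ j, h ∈ colHooks p j := by
  simp only [hooks, colHooks, Multiset.mem_map, Finset.mem_val, Finset.mem_filter,
    Finset.mem_product, Finset.mem_range, Finset.mem_image]
  constructor
  · rintro ⟨⟨i, j⟩, ⟨-, hj⟩, rfl⟩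
    exact ⟨j, i, (lt_rowLen p).1 hj, rfl⟩
  · rintro ⟨j, i, hi, rfl⟩
    refine ⟨(i, j), ⟨⟨hi.trans_le (colLen_le p j), ?_⟩, (lt_rowLen p).2 hi⟩, rfl⟩
    by_contra hN
    rw [colLen_eq_zero p (not_lt.1 hN)] at hi
    omega

theorem prod_map_hooks {N : ℕ} {M : Type*} [CommMonoid M] (p : N.Partition) (g : ℕ → M) :
    ((hooks p).map g).prod = ∏ j ∈ Finset.range N, ∏ b ∈ colHooks p j, g b := by
  rw [hooks, Multiset.map_map]
  refine (Finset.prod_eq_multiset_prod _ _).symm.trans ?_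
  rw [Finset.prod_filter, Finset.prod_product_right]
  refine Finset.prod_congr rfl fun j _ => ?_
  rw [colHooks, Finset.prod_image (colHook_injOn p j), ← Finset.prod_filter]
  refine Finset.prod_congr ?_ fun _ _ => rfl
  ext i
  have := colLen_le p j
  simp only [Finset.mem_filter, Finset.mem_range, lt_rowLen]
  omega

theorem colHooks_eq {N : ℕ} (p : N.Partition) (j : ℕ) :
    colHooks p j = prependColumn (colLen p j - colLen p (j + 1)) (colHooks p (j + 1)) := by
  have hle : colLen p (j + 1) ≤ colLen p j := colLen_antitone p (Nat.le_succ j)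
  ext b
  rw [mem_prependColumn]
  simp only [colHooks, Finset.mem_image, Finset.mem_range]
  constructor
  · rintro ⟨i, hi, rfl⟩
    have h1 := (lt_rowLen p).2 hi
    by_cases hi' : i < colLen p (j + 1)
    · have h2 := (lt_rowLen p).2 hi'
      exact Or.inr ⟨by omega, i, hi', by omega⟩
    · have h2 : ¬ j + 1 < rowLen p i := fun h => hi' ((lt_rowLen p).1 h)
      exact Or.inl (by omega)
  · rintro (⟨h1, h2⟩ | ⟨h1, i, hi, h2⟩)
    · have hi : colLen p j - b < colLen p j := by omega
      have hi' : ¬ colLen p j - b < colLen p (j + 1) := by omega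
      have h3 := (lt_rowLen p).2 hi
      have h4 : ¬ j + 1 < rowLen p (colLen p j - b) := fun h => hi' ((lt_rowLen p).1 h)
      exact ⟨_, hi, by omega⟩
    · have h3 := (lt_rowLen p).2 hi
      exact ⟨i, by omega, by omega⟩

/-- Descending induction from infinity. -/
theorem forall_of_eventually_of_succ {P : ℕ → Prop} (N : ℕ) (h : ∀ j, N ≤ j → P j)
    (hs : ∀ j, P (j + 1) → P j) (j : ℕ) : P j := by
  rcases le_total N j with hj | hj
  · exact h j hj
  · exact Nat.decreasingInduction (motive := fun k _ => P k) (fun k _ => hs k) (h N le_rfl) hj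

/-- The column lengths of `p` are those of the `3`-core with runner lengths `v`. -/
def HasAbacus {N : ℕ} (p : N.Partition) (v : ℕ × ℕ) : Prop :=
  ∀ j, colLen p j = (abacusStep^[j] v).1 + (abacusStep^[j] v).2

theorem HasAbacus.iterate_eq_zero {N : ℕ} {p : N.Partition} {v : ℕ × ℕ} (h : HasAbacus p v)
    {j : ℕ} (hj : N ≤ j) : abacusStep^[j] v = (0, 0) := by
  have := h j
  rw [colLen_eq_zero p hj] at this
  exact Prod.ext (by simp only; omega) (by simp only; omega)

theorem colHooks_eq_empty {N : ℕ} (p : N.Partition) {j : ℕ} (hj : N ≤ j) : colHooks p j = ∅ := by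
  rw [colHooks, colLen_eq_zero p hj]; rfl

theorem colHooks_eq_abacusBeads {N : ℕ} (p : N.Partition) (v : ℕ × ℕ) (J : ℕ)
    (h : ∀ k, colLen p (J + k) = (abacusStep^[k] v).1 + (abacusStep^[k] v).2) (k : ℕ) :
    colHooks p (J + k) = abacusBeads (abacusStep^[k] v) := by
  refine forall_of_eventually_of_succ (P := fun k =>
    colHooks p (J + k) = abacusBeads (abacusStep^[k] v)) N (fun j hj => ?_) (fun j ih => ?_) k
  · have h0 := h j
    rw [colLen_eq_zero p (by omega)] at h0
    have : abacusStep^[j] v = (0, 0) := Prod.ext (by simp only; omega) (by simp only; omega)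
    rw [colHooks_eq_empty p (by omega), this]
    rfl
  · have h1 := h (j + 1)
    rw [Function.iterate_succ_apply', ← add_assoc] at ih h1
    rw [colHooks_eq, abacusBeads_eq, ih, h, h1]

theorem exists_hasAbacus {N : ℕ} (p : N.Partition) (h3 : 3 ∉ hooks p) :
    ∃ v, HasAbacus p v := by
  have key : ∀ J, ∃ v, ∀ k, colLen p (J + k) = (abacusStep^[k] v).1 + (abacusStep^[k] v).2 := by
    refine forall_of_eventually_of_succ N (fun j hj => ⟨(0, 0), fun k => ?_⟩) ?_
    · rw [colLen_eq_zero p (by omega), Function.iterate_fixed (by rfl)]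
      rfl
    · rintro j ⟨u, hu⟩
      have hb : colHooks p (j + 1) = abacusBeads u := colHooks_eq_abacusBeads p u (j + 1) hu 0
      have hj : 3 ∉ colHooks p j := fun h => h3 ((mem_hooks p).2 ⟨j, h⟩)
      rw [colHooks_eq, hb] at hj
      obtain ⟨w, hw, hc⟩ := exists_abacusStep_eq hj
      refine ⟨w, fun k => ?_⟩
      cases k with
      | zero =>
        have h0 : colLen p (j + 1) = u.1 + u.2 := hu 0
        have hle : colLen p (j + 1) ≤ colLen p j := colLen_antitone p (Nat.le_succ j)
        simp only [add_zero, Function.iterate_zero, id_eq]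
        omega
      | succ k =>
        rw [Function.iterate_succ_apply, hw, ← hu k]
        congr 1
        omega
  obtain ⟨v, hv⟩ := key 0
  exact ⟨v, fun j => by rw [← hv, zero_add]⟩

theorem HasAbacus.colHooks_eq {N : ℕ} {p : N.Partition} {v : ℕ × ℕ} (h : HasAbacus p v) (j : ℕ) :
    colHooks p j = abacusBeads (abacusStep^[j] v) := by
  have := colHooks_eq_abacusBeads p v 0 (fun k => by rw [zero_add]; exact h k) j
  rwa [zero_add] at this

theorem HasAbacus.isThreeCore {N : ℕ} {p : N.Partition} {v : ℕ × ℕ} (h : HasAbacus p v) :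
    IsThreeCore p := by
  intro b hb
  obtain ⟨j, hj⟩ := (mem_hooks p).1 hb
  rw [h.colHooks_eq, mem_abacusBeads] at hj
  omega

theorem IsThreeCore.exists_hasAbacus {N : ℕ} {p : N.Partition} (h : IsThreeCore p) :
    ∃ v, HasAbacus p v :=
  _root_.exists_hasAbacus p fun h3 => h 3 h3 dvd_rfl

theorem prod_hooks_eq_zero {N : ℕ} {p : N.Partition} (h : ¬ IsThreeCore p) :
    ((hooks p).map (fun h : ℕ => 1 - 9 / (h : ℚ) ^ 2)).prod = 0 := by
  have h3 : 3 ∈ hooks p := by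
    by_contra h3
    obtain ⟨v, hv⟩ := exists_hasAbacus p h3
    exact h hv.isThreeCore
  exact Multiset.prod_eq_zero (Multiset.mem_map.2 ⟨3, h3, by norm_num⟩)

theorem HasAbacus.prod_hooks {N : ℕ} {p : N.Partition} {v : ℕ × ℕ} (h : HasAbacus p v) :
    ((hooks p).map (fun h : ℕ => 1 - 9 / (h : ℚ) ^ 2)).prod = abacusWeight v := by
  rw [prod_map_hooks, ← prod_iterate_abacusStep N v (h.iterate_eq_zero le_rfl)]
  exact Finset.prod_congr rfl fun j _ => by rw [h.colHooks_eq]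

theorem HasAbacus.size_eq {N : ℕ} {p : N.Partition} {v : ℕ × ℕ} (h : HasAbacus p v) :
    (N : ℤ) = v.1 ^ 2 + v.2 ^ 2 - v.1 * v.2 + v.2 := by
  rw [← sum_iterate_abacusStep N v (h.iterate_eq_zero le_rfl)]
  exact_mod_cast (sum_colLen p).symm.trans (Finset.sum_congr rfl fun j _ => h j)

theorem exists_multiset_of_abacus (n : ℕ) (v : ℕ × ℕ) (h : abacusStep^[n] v = (0, 0)) :
    ∃ s : Multiset ℕ, (∀ a ∈ s, 0 < a) ∧
      ∀ j, (s.filter (j < ·)).card = (abacusStep^[j] v).1 + (abacusStep^[j] v).2 := by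
  induction n generalizing v with
  | zero =>
    obtain rfl : v = (0, 0) := h
    exact ⟨0, by simp, fun j => by rw [Function.iterate_fixed (by rfl)]; rfl⟩
  | succ n ih =>
    obtain ⟨s, hpos, hs⟩ := ih _ h
    have hcard : s.card = (abacusStep v).1 + (abacusStep v).2 := by
      have := hs 0
      rwa [Multiset.filter_eq_self.2 hpos] at this
    refine ⟨s.map (· + 1) + Multiset.replicate (v.1 + v.2 - s.card) 1, ?_, fun j => ?_⟩
    · intro a ha
      rcases Multiset.mem_add.1 ha with ha | ha
      · obtain ⟨b, -, rfl⟩ := Multiset.mem_map.1 ha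
        exact Nat.succ_pos b
      · rw [Multiset.eq_of_mem_replicate ha]; exact one_pos
    · rw [Multiset.filter_add, Multiset.card_add, Multiset.filter_map, Multiset.card_map]
      cases j with
      | zero =>
        have := size_abacusStep_le v
        have hs0 : s.filter ((fun x => 0 < x) ∘ fun x => x + 1) = s :=
          Multiset.filter_eq_self.2 fun a _ => Nat.succ_pos a
        rw [hs0, Multiset.filter_eq_self.2 fun a ha =>
          by rw [Multiset.eq_of_mem_replicate ha]; exact one_pos, Multiset.card_replicate]
        simp only [Function.iterate_zero, id_eq]
        omega
      | succ j =>
        rw [(Multiset.filter_eq_nil (s := Multiset.replicate _ 1)).2 fun a ha => by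
          rw [Multiset.eq_of_mem_replicate ha]; omega, Multiset.card_zero, add_zero,
          Function.iterate_succ_apply, ← hs]
        congr 1
        exact Multiset.filter_congr fun a _ => by simp

theorem exists_partition_of_abacus {N : ℕ} {v : ℕ × ℕ}
    (hv : (N : ℤ) = v.1 ^ 2 + v.2 ^ 2 - v.1 * v.2 + v.2) :
    ∃ p : N.Partition, HasAbacus p v := by
  obtain ⟨n, hn⟩ := exists_iterate_abacusStep v
  obtain ⟨s, hpos, hs⟩ := exists_multiset_of_abacus n v hn
  let q : s.sum.Partition := ⟨s, fun {i} hi => hpos i hi, rfl⟩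
  have hq : HasAbacus q v := hs
  have hsum : s.sum = N := by exact_mod_cast hq.size_eq.trans hv.symm
  exact ⟨⟨s, fun {i} hi => hpos i hi, hsum⟩, hs⟩

/-- The Eisenstein integer attached to the `3`-core with runner lengths `v`. -/
def abacusEis (v : ℕ × ℕ) : Eis := ⟨1 + v.1 + v.2, 2 * v.1 - v.2⟩

theorem abacusEis_injective : Function.Injective abacusEis := by
  intro v w h
  have h1 := congrArg QuadraticAlgebra.re h
  have h2 := congrArg QuadraticAlgebra.im h
  simp only [abacusEis] at h1 h2
  exact Prod.ext (by omega) (by omega)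

theorem norm_abacusEis (v : ℕ × ℕ) :
    QuadraticAlgebra.norm (abacusEis v) =
      3 * ((v.1 : ℤ) ^ 2 + v.2 ^ 2 - v.1 * v.2 + v.2) + 1 := by
  rw [Eis.norm_eq, abacusEis]; ring

theorem trace_abacusEis (v : ℕ × ℕ) :
    ((QuadraticAlgebra.trace (abacusEis v ^ 3) : ℤ) : ℚ) = 2 * abacusWeight v := by
  rw [Eis.trace_pow_three, abacusEis, abacusWeight]; push_cast; ring

theorem HasAbacus.mem_cone {N : ℕ} {p : N.Partition} {v : ℕ × ℕ} (h : HasAbacus p v) :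
    abacusEis v ∈ Eis.cone (3 * N + 1) := by
  refine Finset.mem_filter.2 ⟨Eis.mem_primaryOfNorm.2 ⟨?_, v.1, ?_⟩, ?_, ?_⟩
  · rw [norm_abacusEis, ← h.size_eq]; push_cast; rfl
  all_goals simp only [abacusEis]; omega

theorem exists_abacusEis_eq {N : ℕ} {x : Eis} (hx : x ∈ Eis.cone (3 * N + 1)) :
    ∃ p : N.Partition, ∃ v, HasAbacus p v ∧ abacusEis v = x := by
  obtain ⟨hx, h1, h2⟩ := Finset.mem_filter.1 hx
  obtain ⟨hn, u, hu⟩ := Eis.mem_primaryOfNorm.1 hx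
  have hv : abacusEis (((x.re + x.im) / 3).toNat, ((2 * x.re - x.im) / 3).toNat) = x := by
    refine QuadraticAlgebra.ext ?_ ?_ <;> simp only [abacusEis] <;> omega
  rw [← hv, norm_abacusEis] at hn
  obtain ⟨p, hp⟩ := exists_partition_of_abacus (N := N)
    (v := (((x.re + x.im) / 3).toNat, ((2 * x.re - x.im) / 3).toNat)) (by push_cast at hn; linarith)
  exact ⟨p, _, hp, hv⟩

theorem HasAbacus.unique {N : ℕ} {p q : N.Partition} {v : ℕ × ℕ} (hp : HasAbacus p v)
    (hq : HasAbacus q v) : p = q :=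
  colLen_injective (funext fun j => (hp j).trans (hq j).symm)

theorem HasAbacus.eq {N : ℕ} {p : N.Partition} {v w : ℕ × ℕ} (hv : HasAbacus p v)
    (hw : HasAbacus p w) : v = w :=
  abacusBeads_injective ((hv.colHooks_eq 0).symm.trans (hw.colHooks_eq 0))

theorem two_mul_sum_prod_hooks (N : ℕ) :
    2 * ∑ p : N.Partition, ((hooks p).map (fun h : ℕ => 1 - 9 / (h : ℚ) ^ 2)).prod =
      ((∑ x ∈ Eis.cone (3 * N + 1), QuadraticAlgebra.trace (x ^ 3) : ℤ) : ℚ) := by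
  classical
  have h0 := Finset.sum_filter_of_ne (s := (Finset.univ : Finset N.Partition))
    (f := fun p => ((hooks p).map (fun h : ℕ => 1 - 9 / (h : ℚ) ^ 2)).prod) (p := IsThreeCore)
    fun p _ hp => by
      by_contra h
      exact hp (prod_hooks_eq_zero h)
  rw [← h0, Finset.mul_sum, Int.cast_sum]
  have hex (p : N.Partition) (hp : p ∈ Finset.univ.filter (IsThreeCore (N := N))) :
      ∃ v, HasAbacus p v := (Finset.mem_filter.1 hp).2.exists_hasAbacus
  refine Finset.sum_bij (fun p hp => abacusEis (hex p hp).choose) ?_ ?_ ?_ ?_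
  · exact fun p hp => (hex p hp).choose_spec.mem_cone
  · intro p hp q hq h
    have hv := abacusEis_injective h
    exact (hex p hp).choose_spec.unique (hv ▸ (hex q hq).choose_spec)
  · intro x hx
    obtain ⟨p, v, hpv, rfl⟩ := exists_abacusEis_eq hx
    have hp : p ∈ Finset.univ.filter (IsThreeCore (N := N)) :=
      Finset.mem_filter.2 ⟨Finset.mem_univ p, hpv.isThreeCore⟩
    exact ⟨p, hp, congrArg abacusEis ((hex p hp).choose_spec.eq hpv)⟩
  · intro p hp
    rw [trace_abacusEis, (hex p hp).choose_spec.prod_hooks]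

theorem sum_hook_prod_eq_zero_iff_no_three_core (N : ℕ) (hN : 0 < N) :
    (∑ p : N.Partition, ((hooks p).map (fun h => 1 - 9 / (h : ℚ) ^ 2)).prod) = 0 ↔
      ¬ ∃ p : N.Partition, IsThreeCore p := by
  have hcast (p : N.Partition) : (hooks p >>= fun a => pure (a : ℚ)) = (hooks p).map (↑) := by
    simp
  simp_rw [hcast, Multiset.map_map, Function.comp_def]
  constructor
  · rintro h ⟨p, hp⟩
    obtain ⟨v, hv⟩ := hp.exists_hasAbacus
    have h2 := two_mul_sum_prod_hooks N
    rw [h, mul_zero] at h2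
    exact Eis.sum_cone_ne_zero (Nat.succ_pos _)
      ⟨_, (Finset.mem_filter.1 hv.mem_cone).1⟩ (by exact_mod_cast h2.symm)
  · exact fun h => Finset.sum_eq_zero fun p _ => prod_hooks_eq_zero fun hp => h ⟨p, hp⟩
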